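/- Let M=(Q,Γ,Δ,q₀,γ₀) be a DCFS, k∈ℕ, F⊆Q, and let P be the stratified-trace PDA constructed from M, k and F. Then some state in F is k-stratified reachable by M if and only if there exist words σ_i∈Σ_i* for i=0,…,k such that σ₀σ₁⋯σ_k∈Traces_{T(P)}({(q₀,⊥)},F×{⊥}) and, for every γ∈Γ and every i∈{0,…,k}, |σ_i|_{(γ,i,◁)} ≤ |σ_{i−1}|_{(γ,i,▷)}, where σ_{−1} denotes the single-letter word (γ₀,0,▷). -/

import Mathlib

namespace DCPSFormal

/-- Rules of a dynamic network of concurrent pushdown systems (DCPS):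
creation rules `⟨q,γ⟩ → ⟨q',u⟩ ▷ α` (with `α = none` meaning `ε`),
interruption rules `⟨q,γ⟩ ↦ ⟨q',u⟩`, and resumption rules `q ↦ q' ◁ γ`. -/
inductive Rule (Q Γ : Type*) where
  | cr : Q → Γ → Q → List Γ → Option Γ → Rule Q Γ
  | intr : Q → Γ → Q → List Γ → Rule Q Γ
  | res : Q → Γ → Q → Rule Q Γ

/-- A DCPS: a set of rules, an initial state and an initial stack symbol. -/
structure DCPS (Q Γ : Type*) where
  rules : Set (Rule Q Γ)
  q0 : Q
  γ0 : Γ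

/-- Well-formedness of a DCPS: every pushed word has length at most 2. -/
def IsDCPSWf {Q Γ : Type*} (M : DCPS Q Γ) : Prop :=
  ∀ r ∈ M.rules,
    match r with
    | .cr _ _ _ u _ => u.length ≤ 2
    | .intr _ _ _ u => u.length ≤ 2
    | .res _ _ _ => True

/-- A DCFS is a DCPS in which every pushed word has length at most 1. -/
def IsDCFS {Q Γ : Type*} (M : DCPS Q Γ) : Prop :=
  ∀ r ∈ M.rules,
    match r with
    | .cr _ _ _ u _ => u.length ≤ 1
    | .intr _ _ _ u => u.length ≤ 1
    | .res _ _ _ => True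

/-- A configuration of a DCPS: global state, optional active local configuration
(stack content and switch number), and a finitely supported multiset of pending
local configurations. -/
structure Config (Q Γ : Type*) where
  state : Q
  active : Option (List Γ × ℕ)
  idle : (List Γ × ℕ) →₀ ℕ

/-- The thread possibly spawned by a creation rule with creation component `α`
when the active thread has switch number `i`. -/
noncomputable def spawnOf {Γ : Type*} (α : Option Γ) (i : ℕ) : (List Γ × ℕ) →₀ ℕ :=
  match α with
  | none => 0
  | some a => Finsupp.single ([a], i + 1) 1

/-- The transition system `T(M)` of a DCPS, with steps labelled by rules. -/
inductive Step {Q Γ : Type*} (M : DCPS Q Γ) : Rule Q Γ → Config Q Γ → Config Q Γ → Prop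
  | cr {q γ q' u α w i V} :
      Rule.cr q γ q' u α ∈ M.rules →
      Step M (.cr q γ q' u α) ⟨q, some (γ :: w, i), V⟩ ⟨q', some (u ++ w, i), V + spawnOf α i⟩
  | intr {q γ q' u w i V} :
      Rule.intr q γ q' u ∈ M.rules →
      Step M (.intr q γ q' u) ⟨q, some (γ :: w, i), V⟩
        ⟨q', none, V + Finsupp.single (u ++ w, i + 1) 1⟩
  | res {q γ q' w i V} :
      Rule.res q γ q' ∈ M.rules →
      Step M (.res q γ q') ⟨q, none, V + Finsupp.single (γ :: w, i) 1⟩ ⟨q', some (γ :: w, i), V⟩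

/-- `c ∈ Conf_I(M)`: the active thread exists and its switch number lies in `I`. -/
def ActiveIn {Q Γ : Type*} (I : Set ℕ) (c : Config Q Γ) : Prop :=
  ∃ w i, c.active = some (w, i) ∧ i ∈ I

/-- The `I`-bounded transition system `T_I(M)`. -/
def StepIn {Q Γ : Type*} (M : DCPS Q Γ) (I : Set ℕ) (r : Rule Q Γ) (c c' : Config Q Γ) : Prop :=
  Step M r c c' ∧ (ActiveIn I c ∨ ActiveIn I c')

/-- Reachability in `T(M)`. -/
def Reaches {Q Γ : Type*} (M : DCPS Q Γ) : Config Q Γ → Config Q Γ → Prop :=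
  Relation.ReflTransGen (fun a b => ∃ r, Step M r a b)

/-- Reachability in `T_I(M)`. -/
def ReachesIn {Q Γ : Type*} (M : DCPS Q Γ) (I : Set ℕ) : Config Q Γ → Config Q Γ → Prop :=
  Relation.ReflTransGen (fun a b => ∃ r, StepIn M I r a b)

/-- The initial configuration of a DCPS. -/
noncomputable def initConfig {Q Γ : Type*} (M : DCPS Q Γ) : Config Q Γ :=
  ⟨M.q0, none, Finsupp.single ([M.γ0], 0) 1⟩

/-- `q` is reachable by `M`. -/
def StateReachable {Q Γ : Type*} (M : DCPS Q Γ) (q : Q) : Prop :=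
  ∃ c, Reaches M (initConfig M) c ∧ c.active = none ∧ c.state = q

/-- `q` is `k`-bounded reachable by `M`. -/
def KBoundedReachable {Q Γ : Type*} (M : DCPS Q Γ) (k : ℕ) (q : Q) : Prop :=
  ∃ c, ReachesIn M {i | i ≤ k} (initConfig M) c ∧ c.active = none ∧ c.state = q

/-- `q` is `k`-stratified reachable by `M`. -/
def KStratifiedReachable {Q Γ : Type*} (M : DCPS Q Γ) (k : ℕ) (q : Q) : Prop :=
  ∃ c : ℕ → Config Q Γ, c 0 = initConfig M ∧
    (∀ l ≤ k, ReachesIn M {l} (c l) (c (l + 1))) ∧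
    (c (k + 1)).active = none ∧ (c (k + 1)).state = q

/-- A labelled run in a labelled transition system. -/
inductive LRun {C L : Type*} (step : L → C → C → Prop) : List L → C → C → Prop
  | nil (c) : LRun step [] c c
  | cons {l τ c c' c''} : step l c c' → LRun step τ c' c'' → LRun step (l :: τ) c c''

/-- A pushdown automaton with states `S`, input alphabet `A` and stack alphabet `Γ`. -/
structure PDA (S A Γ : Type*) where
  trans : Set ((S × Γ) × Option A × (S × List Γ))
  p0 : S
  γ0 : Γ
  final : Set S

/-- A single (possibly `ε`-labelled) step of a PDA. -/
inductive PDAStep {S A Γ : Type*} (P : PDA S A Γ) :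
    Option A → (S × List Γ) → (S × List Γ) → Prop
  | mk {p γ a p' u w} : ((p, γ), a, (p', u)) ∈ P.trans →
      PDAStep P a (p, γ :: w) (p', u ++ w)

/-- A run of a PDA labelled by the word obtained by concatenating all non-`ε` labels. -/
inductive PDATrace {S A Γ : Type*} (P : PDA S A Γ) :
    List A → (S × List Γ) → (S × List Γ) → Prop
  | nil (c) : PDATrace P [] c c
  | eps {v c c' c''} : PDAStep P none c c' → PDATrace P v c' c'' → PDATrace P v c c''
  | cons {a v c c' c''} : PDAStep P (some a) c c' → PDATrace P v c' c'' →
      PDATrace P (a :: v) c c''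

/-- The language of a PDA (acceptance by final state). -/
def PDALang {S A Γ : Type*} (P : PDA S A Γ) : Set (List A) :=
  { v | ∃ p w, p ∈ P.final ∧ PDATrace P v (P.p0, [P.γ0]) (p, w) }

/-- A finite state automaton. -/
structure FSA (S A : Type*) where
  trans : Set (S × Option A × S)
  init : Set S
  final : Set S

/-- A run of an FSA labelled by a word (`ε`-labels contribute nothing). -/
inductive FSARun {S A : Type*} (Au : FSA S A) : List A → S → S → Prop
  | nil (s) : FSARun Au [] s s
  | eps {v s s' s''} : (s, none, s') ∈ Au.trans → FSARun Au v s' s'' → FSARun Au v s s''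
  | cons {a v s s' s''} : (s, some a, s') ∈ Au.trans → FSARun Au v s' s'' →
      FSARun Au (a :: v) s s''

/-- The language of an FSA. -/
def FSALang {S A : Type*} (Au : FSA S A) : Set (List A) :=
  { v | ∃ s ∈ Au.init, ∃ s' ∈ Au.final, FSARun Au v s s' }

/-- A vector addition system with states of dimension `n`. -/
structure VASS (n : ℕ) (S A : Type*) where
  δ : S → A → S × (Fin n → ℤ)
  s0 : S
  v0 : Fin n → ℕ

/-- A step of a VASS: `(q₁,u₁) →ᵃ (q₂,u₂)` iff `δ(q₁,a) = (q₂, u₂ - u₁)`. -/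
def VStep {n : ℕ} {S A : Type*} (V : VASS n S A) (a : A) :
    (S × (Fin n → ℕ)) → (S × (Fin n → ℕ)) → Prop :=
  fun c c' => (V.δ c.1 a).1 = c'.1 ∧ ∀ i, (c'.2 i : ℤ) = (c.2 i : ℤ) + (V.δ c.1 a).2 i

/-- Reachability in the transition system of a VASS. -/
def VReaches {n : ℕ} {S A : Type*} (V : VASS n S A) :
    (S × (Fin n → ℕ)) → (S × (Fin n → ℕ)) → Prop :=
  Relation.ReflTransGen (fun c c' => ∃ a, VStep V a c c')

/-- A state `s` is reachable by the VASS `V`. -/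
def VStateReachable {n : ℕ} {S A : Type*} (V : VASS n S A) (s : S) : Prop :=
  ∃ u, VReaches V (V.s0, V.v0) (s, u)

/-- The `i`-th unit vector. -/
def unitVec {m : ℕ} (i : Fin m) : Fin m → ℤ := fun j => if j = i then 1 else 0

/-- The three kinds of letters of the stratified-trace PDA: `▷` (spawn/interrupt),
`◁` (resume), and `−` (silent). -/
inductive Dir where
  | spawn : Dir
  | resume : Dir
  | silent : Dir
deriving DecidableEq

/-- Letters of the stratified-trace PDA: triples over `Γ ∪ {ε}`, a switch number,
and a direction. -/
abbrev Lbl (Γ : Type*) := Option Γ × ℕ × Dir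

/-- The sub-alphabet `Σ_i = ((Γ∪{ε})×{i+1}×{▷}) ∪ (Γ×{i}×{◁}) ∪ {(ε,i,−)}`. -/
def SigmaI {Γ : Type*} (i : ℕ) : Set (Lbl Γ) :=
  { l | (∃ α : Option Γ, l = (α, i + 1, Dir.spawn)) ∨
        (∃ γ : Γ, l = (some γ, i, Dir.resume)) ∨ l = (none, i, Dir.silent) }

/-- Stack symbols of the stratified-trace PDA: `⊥` (= `none`) or a pair
`(w,i)` with `w ∈ Γ ∪ {ε}` and `i` a switch number. -/
abbrev PSym (Γ : Type*) := Option (Option Γ × ℕ)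

/-- The transitions of the stratified-trace PDA constructed from a DCFS `M` and `k`
(the pushed word `u` of a DCFS rule, of length at most 1, is represented by `u.head?`). -/
inductive STrans {Q Γ : Type*} (M : DCPS Q Γ) (k : ℕ) :
    ((Q × PSym Γ) × Option (Lbl Γ) × (Q × List (PSym Γ))) → Prop
  | silent {q γ q' u} (i : ℕ) : Rule.cr q γ q' u none ∈ M.rules → i ≤ k →
      STrans M k ((q, some (some γ, i)), some (none, i, Dir.silent), (q', [some (u.head?, i)]))
  | spawn {q γ q' u a} (i : ℕ) : Rule.cr q γ q' u (some a) ∈ M.rules → i ≤ k →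
      STrans M k
        ((q, some (some γ, i)), some (some a, i + 1, Dir.spawn), (q', [some (u.head?, i)]))
  | intr {q γ q' u} (i : ℕ) : Rule.intr q γ q' u ∈ M.rules → i ≤ k →
      STrans M k ((q, some (some γ, i)), some (u.head?, i + 1, Dir.spawn), (q', [none]))
  | res {q γ q'} (i : ℕ) : Rule.res q γ q' ∈ M.rules → i ≤ k →
      STrans M k ((q, none), some (some γ, i, Dir.resume), (q', [some (some γ, i)]))

/-- The stratified-trace PDA constructed from a DCFS `M`, `k ∈ ℕ` and `F ⊆ Q`. -/
def stratPDA {Q Γ : Type*} (M : DCPS Q Γ) (k : ℕ) (F : Set Q) : PDA Q (Lbl Γ) (PSym Γ) where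
  trans := { t | STrans M k t }
  p0 := M.q0
  γ0 := none
  final := F

/-!
In a DCFS every stack has height at most one, so the active thread fits into a single stack symbol
of the PDA and the PDA simulates the DCFS step by step; what it forgets is the multiset of idle
threads. Along a word over `Σ_i` this multiset changes as the marking of a Petri net: letters
`(γ, i, ◁)` take threads out and letters `(α, i+1, ▷)` put threads in. Because all the
resumptions concern switch number `i` and all the spawned threads have switch number `i + 1`,
nothing spawned in stage `i` can be resumed in stage `i`, so the order of the letters is irrelevant:
the whole word can be fired at once, exactly when the idle multiset at the start of the stage
contains the threads it resumes. The idle threads with switch number `i` at that moment are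
precisely the ones spawned by `σ_{i-1}`, which turns this condition into the inequality between
letter counts.
-/

section Sequences

variable {α : Type*} {n : ℕ}

theorem exists_seq_of_forall_le {P : ℕ → α → Prop} {R : ℕ → α → α → Prop} {a : α} (ha : P 0 a)
    (h : ∀ l a, l ≤ n → P l a → ∃ b, R l a b ∧ P (l + 1) b) :
    ∃ c : ℕ → α, c 0 = a ∧ (∀ l ≤ n, R l (c l) (c (l + 1))) ∧ ∀ l ≤ n + 1, P l (c l) := by
  have : Nonempty α := ⟨a⟩
  choose! f hR hP using h
  let c : ℕ → α := fun l => Nat.rec a f l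
  have hc : ∀ l ≤ n + 1, P l (c l) := by
    intro l
    induction l with
    | zero => exact fun _ => ha
    | succ l ih => exact fun hl => hP l (c l) (by omega) (ih (by omega))
  exact ⟨c, rfl, fun l hl => hR l (c l) hl (hc l (by omega)), hc⟩

end Sequences

section Finsupp

variable {ι : Type*}

theorem forall_mem_support_add_single {f : ι →₀ ℕ} {x : ι} {p : ι → Prop} :
    (∀ y ∈ (f + Finsupp.single x 1).support, p y) ↔ (∀ y ∈ f.support, p y) ∧ p x := by
  classical
  have hmem (y : ι) : y ∈ (f + Finsupp.single x 1).support ↔ y ∈ f.support ∨ y = x := by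
    rcases eq_or_ne x y with rfl | hne
    · simp
    · simp [hne.symm]
  simp only [hmem, or_imp, forall_and, forall_eq]

theorem exists_eq_add_of_add_eq_add {f g r s : ι →₀ ℕ} (hrs : Disjoint r s)
    (h : f + s = g + r) : ∃ u, f = u + r ∧ g = u + s := by
  have hrf : r ≤ f := by
    intro x
    have hx := DFunLike.congr_fun h x
    have hdisj := DFunLike.congr_fun (hrs.eq_bot.trans bot_eq_zero) x
    simp only [Finsupp.add_apply, Finsupp.inf_apply, Finsupp.zero_apply] at hx hdisj
    omega
  obtain ⟨u, rfl⟩ := exists_add_of_le hrf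
  refine ⟨u, add_comm r u, add_right_cancel (b := r) ?_⟩
  rw [← h]
  abel

end Finsupp

section PDA

variable {S A Γ : Type*} {P : PDA S A Γ} {x y z : S × List Γ} {u v : List A}

theorem PDATrace.append (h : PDATrace P u x y) (h' : PDATrace P v y z) :
    PDATrace P (u ++ v) x z := by
  induction h with
  | nil => exact h'
  | eps hs _ ih => exact .eps hs (ih h')
  | cons hs _ ih => exact .cons hs (ih h')

theorem PDATrace.exists_of_append (h : PDATrace P (u ++ v) x z) :
    ∃ y, PDATrace P u x y ∧ PDATrace P v y z := by
  generalize hw : u ++ v = w at h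
  induction h generalizing u with
  | nil x =>
    obtain ⟨rfl, rfl⟩ := List.append_eq_nil_iff.1 hw
    exact ⟨x, .nil x, .nil x⟩
  | eps hs _ ih =>
    obtain ⟨y, hu, hv⟩ := ih hw
    exact ⟨y, .eps hs hu, hv⟩
  | @cons a w x x' z hs ht ih =>
    rcases List.append_eq_cons_iff.1 hw with ⟨rfl, rfl⟩ | ⟨u, rfl, rfl⟩
    · exact ⟨x, .nil x, .cons hs ht⟩
    · obtain ⟨y, hu, hv⟩ := ih rfl
      exact ⟨y, .cons hs hu, hv⟩

theorem pdaTrace_append_iff :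
    PDATrace P (u ++ v) x z ↔ ∃ y, PDATrace P u x y ∧ PDATrace P v y z :=
  ⟨PDATrace.exists_of_append, fun ⟨_, hu, hv⟩ => hu.append hv⟩

-- Stated for a positive number of words: `ε`-moves may change the configuration on an empty word.
theorem pdaTrace_flatMap_range_succ_iff {σ : ℕ → List A} {n : ℕ} :
    PDATrace P ((List.range (n + 1)).flatMap σ) x y ↔
      ∃ z : ℕ → S × List Γ, z 0 = x ∧ z (n + 1) = y ∧
        ∀ l ≤ n, PDATrace P (σ l) (z l) (z (l + 1)) := by
  induction n generalizing σ x with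
  | zero =>
    constructor
    · intro h
      exact ⟨fun l => l.casesOn x fun _ => y, rfl, rfl, by simpa using h⟩
    · rintro ⟨z, rfl, rfl, h⟩
      simpa using h 0 le_rfl
  | succ n ih =>
    rw [List.range_succ_eq_map, List.flatMap_cons, List.flatMap_map, pdaTrace_append_iff]
    simp only [ih]
    constructor
    · rintro ⟨_, h0, z, rfl, rfl, h⟩
      refine ⟨fun l => l.casesOn x z, rfl, rfl, ?_⟩
      rintro (_ | l) hl
      · exact h0
      · exact h l (by omega)
    · rintro ⟨z, rfl, rfl, h⟩
      exact ⟨z 1, h 0 (by omega), fun l => z (l + 1), rfl, rfl, fun l hl => h (l + 1) (by omega)⟩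

end PDA

section Fires

variable {Γ : Type*} {d : Dir} {a : Lbl Γ} {v : List (Lbl Γ)} {l : ℕ}
  {V V' V'' : (List Γ × ℕ) →₀ ℕ}

/-- The multiset of threads named by the letters of direction `d` in the word `v`: for
`d = Dir.spawn` the threads which `v` adds to the idle multiset, for `d = Dir.resume` those which
it takes out of it. -/
noncomputable def threads (d : Dir) (v : List (Lbl Γ)) : (List Γ × ℕ) →₀ ℕ :=
  (v.map fun a => if a.2.2 = d then Finsupp.single (a.1.toList, a.2.1) 1 else 0).sum

@[simp]
theorem threads_nil : threads d ([] : List (Lbl Γ)) = 0 := rfl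

theorem threads_singleton :
    threads d [a] = if a.2.2 = d then Finsupp.single (a.1.toList, a.2.1) 1 else 0 := by
  simp [threads]

theorem threads_cons : threads d (a :: v) = threads d [a] + threads d v := by
  simp [threads]

theorem threads_apply [DecidableEq Γ] (α : Option Γ) (i : ℕ) :
    threads d v (α.toList, i) = v.count (α, i, d) := by
  induction v with
  | nil => rfl
  | cons a v ih =>
    obtain ⟨β, j, e⟩ := a
    have hinj : β.toList = α.toList ↔ β = α := by cases β <;> cases α <;> simp
    rw [threads_cons, Finsupp.add_apply, ih, threads_singleton, List.count_cons, add_comm]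
    by_cases he : e = d <;> simp [he, Finsupp.single_apply, hinj]

theorem exists_mem_of_threads_apply_ne_zero {t : List Γ × ℕ} (h : threads d v t ≠ 0) :
    ∃ α, (α, t.2, d) ∈ v ∧ α.toList = t.1 := by
  induction v with
  | nil => simp at h
  | cons a v ih =>
    by_cases hv : threads d v t = 0
    · obtain ⟨α, i, e⟩ := a
      rw [threads_cons, Finsupp.add_apply, hv, threads_singleton] at h
      obtain ⟨rfl, rfl⟩ : e = d ∧ (α.toList, i) = t := by
        by_contra hne
        split_ifs at h <;> simp_all
      exact ⟨α, List.mem_cons_self, rfl⟩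
    · obtain ⟨α, hα, ht⟩ := ih hv
      exact ⟨α, List.mem_cons_of_mem _ hα, ht⟩

theorem threads_spawn_apply_eq_zero (hv : ∀ a ∈ v, a ∈ SigmaI l) {t : List Γ × ℕ}
    (ht : t.2 ≠ l + 1) : threads .spawn v t = 0 := by
  by_contra h
  obtain ⟨α, hα, -⟩ := exists_mem_of_threads_apply_ne_zero h
  exact ht (by simpa [SigmaI] using hv _ hα)

theorem exists_of_threads_resume_apply_ne_zero (hv : ∀ a ∈ v, a ∈ SigmaI l) {t : List Γ × ℕ}
    (ht : threads .resume v t ≠ 0) : ∃ γ, t = ([γ], l) := by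
  obtain ⟨α, hα, hw⟩ := exists_mem_of_threads_apply_ne_zero ht
  obtain ⟨⟨γ, rfl⟩, hl⟩ : (∃ γ, α = some γ) ∧ t.2 = l := by simpa [SigmaI] using hv _ hα
  exact ⟨γ, Prod.ext hw.symm hl⟩

theorem threads_resume_le_iff [DecidableEq Γ] (hv : ∀ a ∈ v, a ∈ SigmaI l) :
    threads .resume v ≤ V ↔ ∀ γ, v.count (some γ, l, .resume) ≤ V ([γ], l) := by
  constructor
  · intro h γ
    simpa [← threads_apply] using h ([γ], l)
  · intro h t
    by_cases ht : threads .resume v t = 0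
    · simp [ht]
    · obtain ⟨γ, rfl⟩ := exists_of_threads_resume_apply_ne_zero hv ht
      exact (threads_apply (some γ) l).trans_le (h γ)

theorem disjoint_threads_resume_spawn {u : List (Lbl Γ)} (hu : ∀ a ∈ u, a ∈ SigmaI l)
    (hv : ∀ a ∈ v, a ∈ SigmaI l) : Disjoint (threads .resume v) (threads .spawn u) := by
  rw [disjoint_iff, bot_eq_zero]
  ext t
  by_cases ht : threads .resume v t = 0
  · simp [ht]
  · obtain ⟨γ, rfl⟩ := exists_of_threads_resume_apply_ne_zero hv ht
    simp [threads_spawn_apply_eq_zero hu]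

/-- The firing rule of Petri nets, with the whole word `v` as a single transition: the idle
multiset `V` contains all threads resumed in `v`, and replacing them by the threads spawned in `v`
yields `V'`. -/
def Fires (v : List (Lbl Γ)) (V V' : (List Γ × ℕ) →₀ ℕ) : Prop :=
  ∃ U, V = U + threads .resume v ∧ V' = U + threads .spawn v

@[simp]
theorem fires_nil : Fires [] V V' ↔ V' = V := by
  simp [Fires, eq_comm]

@[simp]
theorem fires_silent {α : Option Γ} {i : ℕ} : Fires [(α, i, .silent)] V V' ↔ V' = V := by
  simp [Fires, threads_singleton, eq_comm]

@[simp]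
theorem fires_spawn {α : Option Γ} {i : ℕ} :
    Fires [(α, i, .spawn)] V V' ↔ V' = V + Finsupp.single (α.toList, i) 1 := by
  simp [Fires, threads_singleton]

@[simp]
theorem fires_resume {α : Option Γ} {i : ℕ} :
    Fires [(α, i, .resume)] V V' ↔ V = V' + Finsupp.single (α.toList, i) 1 := by
  simp [Fires, threads_singleton]

theorem Fires.exists_of_cons (h : Fires (a :: v) V V'') :
    ∃ V', Fires [a] V V' ∧ Fires v V' V'' := by
  obtain ⟨U, rfl, rfl⟩ := h
  refine ⟨U + threads .resume v + threads .spawn [a], ⟨U + threads .resume v, ?_, rfl⟩,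
    ⟨U + threads .spawn [a], ?_, ?_⟩⟩
  · rw [threads_cons (v := v)]; abel
  · abel
  · rw [threads_cons (v := v)]; abel

-- Threads spawned by `a` have switch number `l + 1`, so none of them is resumed in `v`.
theorem Fires.cons (ha : a ∈ SigmaI l) (hv : ∀ b ∈ v, b ∈ SigmaI l) (h : Fires [a] V V')
    (h' : Fires v V' V'') : Fires (a :: v) V V'' := by
  obtain ⟨U, rfl, rfl⟩ := h
  obtain ⟨U', hU, rfl⟩ := h'
  obtain ⟨W, rfl, rfl⟩ :=
    exists_eq_add_of_add_eq_add (disjoint_threads_resume_spawn (by simpa using ha) hv) hU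
  exact ⟨W, by rw [threads_cons (v := v)]; abel, by rw [threads_cons (v := v)]; abel⟩

theorem Fires.apply_le (h : Fires v V V') (t : List Γ × ℕ) :
    V' t ≤ V t + threads .spawn v t := by
  obtain ⟨U, rfl, rfl⟩ := h
  simp only [Finsupp.add_apply]
  omega

theorem exists_fires_iff : (∃ V', Fires v V V') ↔ threads .resume v ≤ V := by
  constructor
  · rintro ⟨_, U, rfl, -⟩
    exact le_add_self
  · intro h
    exact ⟨_, V - threads .resume v, (tsub_add_cancel_of_le h).symm, rfl⟩

/-- The word `σ_{i-1}`, where `σ_{-1}` is the single letter `(γ₀, 0, ▷)`. -/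
def prevWord (γ₀ : Γ) (σ : ℕ → List (Lbl Γ)) (i : ℕ) : List (Lbl Γ) :=
  if i = 0 then [(some γ₀, 0, .spawn)] else σ (i - 1)

theorem count_prevWord_zero [DecidableEq Γ] (γ₀ γ : Γ) (σ : ℕ → List (Lbl Γ)) :
    (prevWord γ₀ σ 0).count (some γ, 0, .spawn) = Finsupp.single ([γ₀], 0) 1 ([γ], 0) := by
  rw [← threads_apply]
  simp [prevWord, threads_singleton]

@[simp]
theorem prevWord_succ (γ₀ : Γ) (σ : ℕ → List (Lbl Γ)) (i : ℕ) : prevWord γ₀ σ (i + 1) = σ i := rfl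

theorem count_resume_le_of_fires [DecidableEq Γ] {γ₀ : Γ} {σ : ℕ → List (Lbl Γ)} {k : ℕ}
    (hσ : ∀ i ≤ k, ∀ a ∈ σ i, a ∈ SigmaI i) {V : ℕ → (List Γ × ℕ) →₀ ℕ}
    (hV₀ : V 0 = Finsupp.single ([γ₀], 0) 1) (hV : ∀ l ≤ k, Fires (σ l) (V l) (V (l + 1)))
    (γ : Γ) {i : ℕ} (hi : i ≤ k) :
    (σ i).count (some γ, i, .resume) ≤ (prevWord γ₀ σ i).count (some γ, i, .spawn) := by
  have hlevel : ∀ l ≤ k, ∀ t, l < t.2 → V l t = 0 := by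
    intro l
    induction l with
    | zero =>
      rintro - t ht
      exact hV₀ ▸ Finsupp.single_eq_of_ne (by rintro rfl; exact ht.false)
    | succ l ih =>
      intro hl t ht
      have := (hV l (by omega)).apply_le t
      rwa [ih (by omega) t (by omega), threads_spawn_apply_eq_zero (hσ l (by omega)) (by omega),
        Nat.le_zero] at this
  refine ((threads_resume_le_iff (hσ i hi)).1 (exists_fires_iff.1 ⟨_, hV i hi⟩) γ).trans ?_
  cases i with
  | zero => rw [count_prevWord_zero, hV₀]
  | succ i =>
    have := (hV i (by omega)).apply_le ([γ], i + 1)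
    rw [hlevel i (by omega) _ (by simp), zero_add] at this
    exact this.trans_eq (threads_apply (some γ) (i + 1))

theorem exists_fires_of_count_resume_le [DecidableEq Γ] {γ₀ : Γ} {σ : ℕ → List (Lbl Γ)} {k : ℕ}
    (hσ : ∀ i ≤ k, ∀ a ∈ σ i, a ∈ SigmaI i)
    (hflow : ∀ γ, ∀ i ≤ k,
      (σ i).count (some γ, i, .resume) ≤ (prevWord γ₀ σ i).count (some γ, i, .spawn)) :
    ∃ V : ℕ → (List Γ × ℕ) →₀ ℕ,
      V 0 = Finsupp.single ([γ₀], 0) 1 ∧ ∀ l ≤ k, Fires (σ l) (V l) (V (l + 1)) := by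
  obtain ⟨V, hV₀, hV, -⟩ := exists_seq_of_forall_le (n := k)
    (P := fun l V => ∀ γ, (prevWord γ₀ σ l).count (some γ, l, .spawn) ≤ V ([γ], l))
    (R := fun l => Fires (σ l)) (fun γ => (count_prevWord_zero γ₀ γ σ).le) <| by
      intro l V hl hV
      obtain ⟨V', U, hU, rfl⟩ := exists_fires_iff.2 <|
        (threads_resume_le_iff (hσ l hl)).2 fun γ => (hflow γ l hl).trans (hV γ)
      refine ⟨_, ⟨U, hU, rfl⟩, fun γ => ?_⟩
      rw [prevWord_succ, ← threads_apply]
      exact Nat.le_add_left _ _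
  exact ⟨V, hV₀, hV⟩

end Fires

section Simulation

variable {Q Γ : Type*} {M : DCPS Q Γ} {k l : ℕ} {F : Set Q} {c c' : Config Q Γ} {r : Rule Q Γ}

/-- All stacks, of the active thread and of the idle ones, have height at most one. This is the
invariant of a DCFS which makes its threads finite-state. -/
structure Config.IsFlat (c : Config Q Γ) : Prop where
  active : ∀ t ∈ c.active, t.1.length ≤ 1
  idle : ∀ t ∈ c.idle.support, t.1.length ≤ 1

/-- The configuration of the stratified-trace PDA which records the global state and the active
thread of `c`. Like the rules of that PDA it keeps only the top of the stack, so it is faithful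
on flat configurations only. -/
def Config.toPDA (c : Config Q Γ) : Q × List (PSym Γ) :=
  (c.state, [c.active.map fun t => (t.1.head?, t.2)])

theorem Config.toPDA_eq_bot_iff {q : Q} :
    c.toPDA = (q, [none]) ↔ c.active = none ∧ c.state = q := by
  simp [Config.toPDA, and_comm]

theorem toList_head?_of_length_le_one {α : Type*} {u : List α} (h : u.length ≤ 1) :
    u.head?.toList = u := by
  match u, h with
  | [], _ => rfl
  | [_], _ => rfl

theorem Config.isFlat_initConfig : (initConfig M).IsFlat := by
  constructor <;> simp [initConfig]

theorem Config.IsFlat.step (hM : IsDCFS M) (hc : c.IsFlat) (h : Step M r c c') : c'.IsFlat := by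
  obtain ⟨hactive, hidle⟩ := hc
  cases h with
  | @cr q γ q' u α w i V hr =>
    have hu : u.length ≤ 1 := hM _ hr
    obtain rfl : w = [] := by simpa using hactive
    refine ⟨by simpa using hu, ?_⟩
    cases α with
    | none => simpa [spawnOf] using hidle
    | some α => exact forall_mem_support_add_single.2 ⟨hidle, le_rfl⟩
  | @intr q γ q' u w i V hr =>
    have hu : u.length ≤ 1 := hM _ hr
    obtain rfl : w = [] := by simpa using hactive
    exact ⟨by simp, forall_mem_support_add_single.2 ⟨hidle, by simpa using hu⟩⟩
  | res hr =>
    obtain ⟨hidle, ht⟩ := forall_mem_support_add_single.1 hidle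
    exact ⟨by simpa using ht, hidle⟩

theorem Config.IsFlat.reachesIn {I : Set ℕ} (hM : IsDCFS M) (hc : c.IsFlat)
    (h : ReachesIn M I c c') : c'.IsFlat := by
  induction h with
  | refl => exact hc
  | tail _ hs ih => exact ih.step hM hs.choose_spec.1

@[simp]
theorem activeIn_some {I : Set ℕ} {q : Q} {w : List Γ} {i : ℕ} {V : (List Γ × ℕ) →₀ ℕ} :
    ActiveIn I ⟨q, some (w, i), V⟩ ↔ i ∈ I := by
  simp [ActiveIn]

@[simp]
theorem not_activeIn_none {I : Set ℕ} {q : Q} {V : (List Γ × ℕ) →₀ ℕ} :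
    ¬ ActiveIn I ⟨q, none, V⟩ := by
  simp [ActiveIn]

theorem PDAStep.of_sTrans {s s' : PSym Γ} {q q' : Q} {a : Option (Lbl Γ)}
    (h : STrans M k ((q, s), a, (q', [s']))) : PDAStep (stratPDA M k F) a (q, [s]) (q', [s']) :=
  .mk (P := stratPDA M k F) (w := []) h

theorem StepIn.exists_pdaStep (hM : IsDCFS M) (hl : l ≤ k) (hc : c.IsFlat)
    (h : StepIn M {l} r c c') :
    ∃ a ∈ SigmaI l, PDAStep (stratPDA M k F) (some a) c.toPDA c'.toPDA ∧
      Fires [a] c.idle c'.idle := by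
  obtain ⟨h, hI⟩ := h
  obtain ⟨hactive, hidle⟩ := hc
  cases h with
  | @cr q γ q' u α w i V hr =>
    obtain rfl : i = l := by simpa using hI
    obtain rfl : w = [] := by simpa using hactive
    rw [List.append_nil]
    cases α with
    | none => exact ⟨_, by simp [SigmaI], .of_sTrans (.silent i hr hl), by simp [spawnOf]⟩
    | some α => exact ⟨_, by simp [SigmaI], .of_sTrans (.spawn i hr hl), by simp [spawnOf]⟩
  | @intr q γ q' u w i V hr =>
    have hu : u.length ≤ 1 := hM _ hr
    obtain rfl : i = l := by simpa using hI
    obtain rfl : w = [] := by simpa using hactive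
    exact ⟨_, by simp [SigmaI], .of_sTrans (.intr i hr hl),
      by simp [toList_head?_of_length_le_one hu]⟩
  | @res q γ q' w i V hr =>
    obtain rfl : i = l := by simpa using hI
    obtain rfl : w = [] := by simpa using (forall_mem_support_add_single.1 hidle).2
    exact ⟨_, by simp [SigmaI], .of_sTrans (.res i hr hl), by simp⟩

theorem Config.IsFlat.active_eq_of_map_eq {γ : Γ} {i : ℕ} (hc : c.IsFlat)
    (h : c.active.map (fun t => (t.1.head?, t.2)) = some (some γ, i)) :
    c.active = some ([γ], i) := by
  obtain ⟨⟨w, j⟩, hactive, htop⟩ := Option.map_eq_some_iff.1 h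
  obtain ⟨hw, rfl⟩ : w.head? = some γ ∧ j = i := Prod.mk.inj htop
  have hlen : w.length ≤ 1 := hc.active _ hactive
  rw [hactive, ← toList_head?_of_length_le_one hlen, hw, Option.toList_some]

theorem exists_stepIn_of_pdaStep (hM : IsDCFS M) (hc : c.IsFlat) {a : Lbl Γ} (ha : a ∈ SigmaI l)
    {y : Q × List (PSym Γ)} {V : (List Γ × ℕ) →₀ ℕ}
    (h : PDAStep (stratPDA M k F) (some a) c.toPDA y) (hV : Fires [a] c.idle V) :
    ∃ c' r, StepIn M {l} r c c' ∧ c'.toPDA = y ∧ c'.idle = V := by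
  generalize hx : c.toPDA = x at h
  obtain ⟨q, act, W⟩ := c
  obtain @⟨p, s, _, p', u, w, htrans⟩ := h
  obtain ⟨rfl, hs, rfl⟩ : q = p ∧ act.map (fun t => (t.1.head?, t.2)) = s ∧ [] = w := by
    simpa [Config.toPDA] using hx
  cases htrans with
  | silent i hr =>
    obtain rfl : i = l := by simpa [SigmaI] using ha
    obtain rfl := hc.active_eq_of_map_eq hs
    exact ⟨_, _, ⟨.cr hr, by simp⟩, by simp [Config.toPDA], by simpa [spawnOf, eq_comm] using hV⟩
  | spawn i hr =>
    obtain rfl : i = l := by simpa [SigmaI] using ha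
    obtain rfl := hc.active_eq_of_map_eq hs
    exact ⟨_, _, ⟨.cr hr, by simp⟩, by simp [Config.toPDA], by simpa [spawnOf, eq_comm] using hV⟩
  | @intr _ _ _ u i hr =>
    have hu : u.length ≤ 1 := hM _ hr
    obtain rfl : i = l := by simpa [SigmaI] using ha
    obtain rfl := hc.active_eq_of_map_eq hs
    exact ⟨_, _, ⟨.intr hr, by simp⟩, by simp [Config.toPDA],
      by simpa [toList_head?_of_length_le_one hu, eq_comm] using hV⟩
  | res i hr =>
    obtain rfl : i = l := by simpa [SigmaI] using ha
    obtain rfl : act = none := by simpa using hs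
    obtain rfl := fires_resume.1 hV
    exact ⟨_, _, ⟨.res hr, by simp⟩, by simp [Config.toPDA], rfl⟩

theorem not_pdaStep_none {x y : Q × List (PSym Γ)} : ¬ PDAStep (stratPDA M k F) none x y := by
  rintro ⟨⟨⟩⟩

theorem ReachesIn.exists_pdaTrace (hM : IsDCFS M) (hl : l ≤ k) (hc : c.IsFlat)
    (h : ReachesIn M {l} c c') :
    ∃ v, (∀ a ∈ v, a ∈ SigmaI l) ∧ PDATrace (stratPDA M k F) v c.toPDA c'.toPDA ∧
      Fires v c.idle c'.idle := by
  induction h using Relation.ReflTransGen.head_induction_on with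
  | refl => exact ⟨[], by simp, .nil _, by simp⟩
  | head hs _ ih =>
    obtain ⟨r, hs⟩ := hs
    obtain ⟨a, ha, hstep, hfire⟩ := hs.exists_pdaStep (F := F) hM hl hc
    obtain ⟨v, hv, htrace, hfires⟩ := ih (hc.step hM hs.1)
    exact ⟨a :: v, List.forall_mem_cons.2 ⟨ha, hv⟩, .cons hstep htrace, hfire.cons ha hv hfires⟩

theorem exists_reachesIn_of_pdaTrace (hM : IsDCFS M) (hc : c.IsFlat) {v : List (Lbl Γ)}
    (hv : ∀ a ∈ v, a ∈ SigmaI l) {y : Q × List (PSym Γ)} {V : (List Γ × ℕ) →₀ ℕ}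
    (h : PDATrace (stratPDA M k F) v c.toPDA y) (hV : Fires v c.idle V) :
    ∃ c', ReachesIn M {l} c c' ∧ c'.toPDA = y ∧ c'.idle = V := by
  generalize hx : c.toPDA = x at h
  induction h generalizing c with
  | nil => exact ⟨c, .refl, hx, (fires_nil.1 hV).symm⟩
  | eps hs => exact (not_pdaStep_none hs).elim
  | cons hs _ ih =>
    obtain ⟨ha, hv⟩ := List.forall_mem_cons.1 hv
    obtain ⟨V', hfire, hfires⟩ := hV.exists_of_cons
    obtain ⟨c₁, r, hstep, htop, rfl⟩ := exists_stepIn_of_pdaStep hM hc ha (hx ▸ hs) hfire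
    obtain ⟨c', hreach, hy, hV'⟩ := ih (hc.step hM hstep.1) hv hfires htop
    exact ⟨c', .head ⟨r, hstep⟩ hreach, hy, hV'⟩

theorem Config.isFlat_of_forall_reachesIn (hM : IsDCFS M) {c : ℕ → Config Q Γ} {I : ℕ → Set ℕ}
    (h₀ : (c 0).IsFlat) (h : ∀ l ≤ k, ReachesIn M (I l) (c l) (c (l + 1))) :
    ∀ l ≤ k + 1, (c l).IsFlat := by
  intro l
  induction l with
  | zero => exact fun _ => h₀
  | succ l ih => exact fun hl => (ih (by omega)).reachesIn hM (h l (by omega))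

variable {q : Q}

theorem KStratifiedReachable.exists_words [DecidableEq Γ] (hM : IsDCFS M)
    (h : KStratifiedReachable M k q) :
    ∃ σ : ℕ → List (Lbl Γ), (∀ i ≤ k, ∀ a ∈ σ i, a ∈ SigmaI i) ∧
      PDATrace (stratPDA M k F) ((List.range (k + 1)).flatMap σ) (M.q0, [none]) (q, [none]) ∧
      ∀ γ, ∀ i ≤ k,
        (σ i).count (some γ, i, .resume) ≤ (prevWord M.γ0 σ i).count (some γ, i, .spawn) := by
  obtain ⟨c, hinit, hrun, hend⟩ := h
  have hflat : ∀ l ≤ k + 1, (c l).IsFlat :=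
    Config.isFlat_of_forall_reachesIn hM (hinit ▸ Config.isFlat_initConfig) hrun
  have hstage (l : ℕ) (hl : l ≤ k) :=
    (hrun l hl).exists_pdaTrace (F := F) hM hl (hflat l (by omega))
  choose! σ hσ htrace hfires using hstage
  have hflow := count_resume_le_of_fires (γ₀ := M.γ0) (V := fun l => (c l).idle) hσ
    (by rw [hinit]; rfl) hfires
  exact ⟨σ, hσ, pdaTrace_flatMap_range_succ_iff.2
    ⟨fun l => (c l).toPDA, congrArg Config.toPDA hinit, Config.toPDA_eq_bot_iff.2 hend, htrace⟩,
    fun γ _ => hflow γ⟩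

theorem kStratifiedReachable_of_words [DecidableEq Γ] (hM : IsDCFS M) {σ : ℕ → List (Lbl Γ)}
    (hσ : ∀ i ≤ k, ∀ a ∈ σ i, a ∈ SigmaI i)
    (htrace : PDATrace (stratPDA M k F) ((List.range (k + 1)).flatMap σ)
      (M.q0, [none]) (q, [none]))
    (hflow : ∀ γ, ∀ i ≤ k,
      (σ i).count (some γ, i, .resume) ≤ (prevWord M.γ0 σ i).count (some γ, i, .spawn)) :
    KStratifiedReachable M k q := by
  obtain ⟨V, hV₀, hV⟩ := exists_fires_of_count_resume_le hσ hflow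
  obtain ⟨z, hz₀, hzk, hz⟩ := pdaTrace_flatMap_range_succ_iff.1 htrace
  obtain ⟨c, hinit, hrun, hc⟩ := exists_seq_of_forall_le (n := k) (a := initConfig M)
    (P := fun l c => c.IsFlat ∧ c.toPDA = z l ∧ c.idle = V l)
    (R := fun l => ReachesIn M {l}) ⟨Config.isFlat_initConfig, hz₀.symm, hV₀.symm⟩ <| by
      rintro l c hl ⟨hflat, htop, hidle⟩
      obtain ⟨c', hreach, htop', hidle'⟩ := exists_reachesIn_of_pdaTrace hM hflat (hσ l hl)
        (htop ▸ hz l hl) (hidle ▸ hV l hl)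
      exact ⟨c', hreach, hflat.reachesIn hM hreach, htop', hidle'⟩
  exact ⟨c, hinit, hrun, Config.toPDA_eq_bot_iff.1 ((hc (k + 1) le_rfl).2.1.trans hzk)⟩

end Simulation

theorem ssrK_iff_strat_trace_general {Q Γ : Type*} [DecidableEq Γ] (M : DCPS Q Γ)
    (hdcfs : IsDCFS M) (k : ℕ) (F : Set Q) :
    (∃ q ∈ F, KStratifiedReachable M k q) ↔
    ∃ σ : ℕ → List (Lbl Γ),
      (∀ i ≤ k, ∀ x ∈ σ i, x ∈ SigmaI i) ∧
      (∃ p ∈ F, PDATrace (stratPDA M k F) ((List.range (k + 1)).flatMap σ)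
        (M.q0, [(none : PSym Γ)]) (p, [(none : PSym Γ)])) ∧
      (∀ (γ : Γ), ∀ i ≤ k,
        (σ i).count ((some γ, i, Dir.resume) : Lbl Γ) ≤
          (if i = 0 then [((some M.γ0, 0, Dir.spawn) : Lbl Γ)] else σ (i - 1)).count
            ((some γ, i, Dir.spawn) : Lbl Γ)) := by
  constructor
  · rintro ⟨q, hq, hreach⟩
    obtain ⟨σ, hσ, htrace, hflow⟩ := hreach.exists_words (F := F) hdcfs
    exact ⟨σ, hσ, ⟨q, hq, htrace⟩, hflow⟩
  · rintro ⟨σ, hσ, ⟨p, hp, htrace⟩, hflow⟩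
    exact ⟨p, hp, kStratifiedReachable_of_words hdcfs hσ htrace hflow⟩

/-- Some state of `F` is `k`-stratified reachable by the DCFS `M`
iff there are words `σ_0 ∈ Σ_0*, …, σ_k ∈ Σ_k*` whose concatenation is a trace of the
stratified-trace PDA from `(q₀,⊥)` to `F × {⊥}` and which satisfy the flow condition
`|σ_i|_{(γ,i,◁)} ≤ |σ_{i−1}|_{(γ,i,▷)}` (with `σ_{−1} = (γ₀,0,▷)`). -/
theorem ssrK_iff_strat_trace
    (Q Γ : Type) [Fintype Q] [Fintype Γ] [DecidableEq Q] [DecidableEq Γ]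
    (M : DCPS Q Γ) (hfin : M.rules.Finite) (hdcfs : IsDCFS M)
    (k : ℕ) (F : Set Q) :
    (∃ q ∈ F, KStratifiedReachable M k q) ↔
    ∃ σ : ℕ → List (Lbl Γ),
      (∀ i ≤ k, ∀ x ∈ σ i, x ∈ SigmaI i) ∧
      (∃ p ∈ F, PDATrace (stratPDA M k F) ((List.range (k + 1)).flatMap σ)
        (M.q0, [(none : PSym Γ)]) (p, [(none : PSym Γ)])) ∧
      (∀ (γ : Γ), ∀ i ≤ k,
        (σ i).count ((some γ, i, Dir.resume) : Lbl Γ) ≤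
          (if i = 0 then [((some M.γ0, 0, Dir.spawn) : Lbl Γ)] else σ (i - 1)).count
            ((some γ, i, Dir.spawn) : Lbl Γ)) :=
  ssrK_iff_strat_trace_general M hdcfs k F

end DCPSFormal
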